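/- For all positive integers m, n and every m-homogeneous polynomial P(z) = ∑_{|α|=m} a_α z^α on ℂ^n, one has (∑_{|α|=m} |a_α|²)^{1/2} = ‖P‖_{L²(μⁿ)} ≤ (√2)^m · ‖P‖_{L¹(μⁿ)}, i.e. (∫_{𝕋^n} |P(z)|² dμⁿ(z))^{1/2} ≤ (√2)^m · ∫_{𝕋^n} |P(z)| dμⁿ(z). (Hypercontractive L¹–L² inequality for m-homogeneous polynomials on the n-torus.) -/

import Mathlib

open Finset MeasureTheory

/-- Evaluation of the `m`-homogeneous polynomial on `ℂ^n` with coefficient family `a`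
(indexed by the multi-indices `α` with `|α| = m`) at the point `z`. -/
noncomputable def mhEval (n m : ℕ) (a : (Fin n → ℕ) → ℂ) (z : Fin n → ℂ) : ℂ :=
  ∑ α ∈ Finset.Nat.antidiagonalTuple n m, a α * ∏ i, z i ^ α i

/-- The parametrization `θ ↦ (e^{2πiθ_1}, …, e^{2πiθ_n})` of the `n`-torus; the normalized
Haar measure `μⁿ` on `𝕋^n` is the image of Lebesgue measure on `(0,1]^n` under this map. -/
noncomputable def torusParam (n : ℕ) (θ : Fin n → ℝ) : Fin n → ℂ :=
  fun j => Complex.exp (2 * Real.pi * Complex.I * θ j)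


open Metric

def Fac (f : ℂ → ℂ) : Prop :=
  ∃ g h : ℂ → ℂ, DiffContOnCl ℂ g (ball 0 1) ∧ DiffContOnCl ℂ h (ball 0 1) ∧
    (∀ z, ‖z‖ ≤ 1 → f z = g z * h z) ∧ (∀ z, ‖z‖ = 1 → ‖g z‖ = ‖h z‖)

lemma Fac.mul {f₁ f₂ : ℂ → ℂ} (h₁ : Fac f₁) (h₂ : Fac f₂) : Fac (fun z => f₁ z * f₂ z) := by
  obtain ⟨g, h, hg, hh, e, n⟩ := h₁
  obtain ⟨g', h', hg', hh', e', n'⟩ := h₂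
  refine ⟨fun z => g z * g' z, fun z => h z * h' z, hg.smul hg', hh.smul hh', ?_, ?_⟩
  · intro z hz
    simp only [e z hz, e' z hz]; ring
  · intro z hz
    simp only [norm_mul, n z hz, n' z hz]

lemma csqrt_mul_self (z : ℂ) : Complex.sqrt z * Complex.sqrt z = z := by
  rw [← sq]; simp [Complex.sqrt]

lemma Fac.const (c : ℂ) : Fac (fun _ => c) :=
  ⟨fun _ => Complex.sqrt c, fun _ => Complex.sqrt c, diffContOnCl_const, diffContOnCl_const,
    fun _ _ => (csqrt_mul_self c).symm, fun _ _ => rfl⟩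

lemma dcc_sqrt (u : ℂ) (hu : ‖u‖ ≤ 1) :
    DiffContOnCl ℂ (fun z => Complex.sqrt (1 - u * z)) (ball 0 1) := by
  have key : ∀ z : ℂ, (u * z).re ≤ ‖z‖ := fun z => by
    calc (u * z).re ≤ ‖u * z‖ := Complex.re_le_norm _
      _ = ‖u‖ * ‖z‖ := norm_mul _ _
      _ ≤ 1 * ‖z‖ := by gcongr
      _ = ‖z‖ := one_mul _
  constructor
  · intro z hz
    have hz' : ‖z‖ < 1 := by simpa using hz
    have : (1 - u * z) ∈ Complex.slitPlane := by
      left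
      have := key z
      simp only [Complex.sub_re, Complex.one_re]; linarith
    exact ((Complex.differentiableAt_sqrt this).comp z
      (by fun_prop : DifferentiableAt ℂ (fun z => 1 - u * z) z)).differentiableWithinAt
  · rw [closure_ball _ one_ne_zero]
    intro z hz
    have hz' : ‖z‖ ≤ 1 := by simpa using hz
    have : 0 ≤ (1 - u * z).re := by
      have := key z
      simp only [Complex.sub_re, Complex.one_re]; linarith
    exact (ContinuousAt.comp (f := fun z => 1 - u * z) (Complex.continuousAt_sqrt (Or.inl this))
      (by fun_prop)).continuousWithinAt

lemma norm_blaschke (w z : ℂ) (hz : ‖z‖ = 1) : ‖z - w‖ = ‖1 - (starRingEnd ℂ) w * z‖ := by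
  have h1 : z * (starRingEnd ℂ) z = 1 := by
    rw [Complex.mul_conj, Complex.normSq_eq_norm_sq, hz]; simp
  have : 1 - (starRingEnd ℂ) w * z = z * (starRingEnd ℂ) (z - w) := by
    rw [map_sub, mul_sub, h1]; ring
  rw [this, norm_mul, hz, one_mul, RCLike.norm_conj]

lemma Fac.linear (w : ℂ) : Fac (fun z => z - w) := by
  rcases le_or_gt 1 ‖w‖ with hw | hw
  · have hw0 : w ≠ 0 := by rintro rfl; norm_num at hw
    have h1 : Fac (fun z => 1 - w⁻¹ * z) :=
      ⟨_, _, dcc_sqrt w⁻¹ (by rw [norm_inv]; exact inv_le_one_of_one_le₀ hw),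
        dcc_sqrt w⁻¹ (by rw [norm_inv]; exact inv_le_one_of_one_le₀ hw),
        fun z _ => (csqrt_mul_self _).symm, fun _ _ => rfl⟩
    have := (Fac.const (-w)).mul h1
    convert this using 2 with z
    field_simp
    ring
  · set u := (starRingEnd ℂ) w with hu
    have hun : ‖u‖ < 1 := by rw [hu, RCLike.norm_conj]; exact hw
    have hne : ∀ z : ℂ, ‖z‖ ≤ 1 → 1 - u * z ≠ 0 := by
      intro z hz h
      have h2 : u * z = 1 := (sub_eq_zero.mp h).symm
      have : ‖u‖ * ‖z‖ = 1 := by rw [← norm_mul, h2, norm_one]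
      nlinarith [norm_nonneg u, norm_nonneg z]
    have hS := dcc_sqrt u hun.le
    have hB : DiffContOnCl ℂ (fun z => (z - w) * (1 - u * z)⁻¹) (ball 0 1) := by
      apply DifferentiableOn.diffContOnCl
      rw [closure_ball _ one_ne_zero]
      intro z hz
      have hz' : ‖z‖ ≤ 1 := by simpa using hz
      have h3 := hne z hz'
      apply DifferentiableAt.differentiableWithinAt
      fun_prop (disch := assumption)
    refine ⟨fun z => (z - w) * (1 - u * z)⁻¹ * Complex.sqrt (1 - u * z), _, hB.smul hS, hS, ?_, ?_⟩
    · intro z hz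
      have h3 := hne z hz
      simp only
      rw [mul_assoc, csqrt_mul_self, mul_assoc, inv_mul_cancel₀ h3, mul_one]
    · intro z hz
      have h3 := hne z hz.le
      simp only [norm_mul, norm_inv]
      rw [norm_blaschke w z hz, mul_inv_cancel₀, one_mul]
      simpa using h3

lemma Fac.poly (p : Polynomial ℂ) : Fac (fun z => p.eval z) := by
  have h := (IsAlgClosed.splits p).eval_eq_prod_roots
  have h2 : ∀ s : Multiset ℂ, Fac (fun z => (s.map (fun a => z - a)).prod) := by
    intro s
    induction s using Multiset.induction with
    | empty => simpa using Fac.const 1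
    | cons a s ih => simpa using (Fac.linear a).mul ih
  simp_rw [h]
  exact (Fac.const _).mul (h2 _)

noncomputable def ee (θ : ℝ) : ℂ := Complex.exp (2 * Real.pi * Complex.I * θ)

noncomputable def nu : Measure ℝ := volume.restrict (Set.Ioc (0 : ℝ) 1)

instance : IsProbabilityMeasure nu := ⟨by simp [nu]⟩

@[fun_prop]
lemma continuous_ee : Continuous ee := by unfold ee; fun_prop

lemma norm_ee (θ : ℝ) : ‖ee θ‖ = 1 := by
  unfold ee
  rw [show (2 * Real.pi * Complex.I * θ : ℂ) = ((2 * Real.pi * θ : ℝ) : ℂ) * Complex.I by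
    push_cast; ring]
  exact Complex.norm_exp_ofReal_mul_I _

lemma ee_ne_zero (θ : ℝ) : ee θ ≠ 0 := Complex.exp_ne_zero _

lemma conj_ee (θ : ℝ) : (starRingEnd ℂ) (ee θ) = (ee θ)⁻¹ := by
  rw [Complex.inv_def, Complex.normSq_eq_norm_sq, norm_ee]; simp

lemma integrable_nu {E : Type*} [NormedAddCommGroup E] {f : ℝ → E} (hf : Continuous f) :
    Integrable f nu := hf.integrableOn_Ioc

lemma integral_nu {E : Type*} [NormedAddCommGroup E] [NormedSpace ℝ E] (f : ℝ → E) :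
    ∫ θ, f θ ∂nu = ∫ θ in (0 : ℝ)..1, f θ := by
  rw [intervalIntegral.integral_of_le zero_le_one]; rfl

lemma orth (j k : ℕ) : ∫ θ, ee θ ^ j * (ee θ)⁻¹ ^ k ∂nu = if j = k then 1 else 0 := by
  have h : ∀ θ : ℝ, ee θ ^ j * (ee θ)⁻¹ ^ k
      = Complex.exp ((2 * Real.pi * Complex.I * ((j : ℤ) - (k : ℤ) : ℤ)) * θ) := by
    intro θ
    unfold ee
    rw [← Complex.exp_neg, ← Complex.exp_nat_mul, ← Complex.exp_nat_mul, ← Complex.exp_add]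
    congr 1; push_cast; ring
  simp_rw [h]
  split_ifs with hjk
  · subst hjk; simp
  · rw [integral_nu, integral_exp_mul_complex]
    · have : (2 * Real.pi * Complex.I * ((j : ℤ) - (k : ℤ) : ℤ) : ℂ) * ((1 : ℝ) : ℂ)
          = ((j : ℤ) - (k : ℤ) : ℤ) * (2 * Real.pi * Complex.I) := by push_cast; ring
      rw [this, Complex.exp_int_mul_two_pi_mul_I]; simp
    · have : ((j : ℤ) - (k : ℤ) : ℤ) ≠ 0 := by omega
      exact mul_ne_zero Complex.two_pi_I_ne_zero (Int.cast_ne_zero.mpr this)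

noncomputable def cf (G : ℝ → ℂ) (k : ℕ) : ℂ := ∫ θ, G θ * (ee θ)⁻¹ ^ k ∂nu

noncomputable def tp (N : ℕ) (a : ℕ → ℂ) (θ : ℝ) : ℂ := ∑ k ∈ range N, a k * ee θ ^ k

@[fun_prop]
lemma continuous_tp (N : ℕ) (a : ℕ → ℂ) : Continuous (tp N a) := by
  unfold tp; fun_prop

@[fun_prop]
lemma continuous_ee_inv : Continuous (fun θ => (ee θ)⁻¹) := continuous_ee.inv₀ ee_ne_zero

lemma cf_tp (N : ℕ) (a : ℕ → ℂ) (k : ℕ) (hk : k < N) : cf (tp N a) k = a k := by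
  unfold cf tp
  simp_rw [Finset.sum_mul]
  rw [integral_finsetSum]
  · simp_rw [mul_assoc, integral_const_mul, orth]
    simp [hk]
  · intro i _
    apply integrable_nu; fun_prop

lemma inner_tp (N : ℕ) (a : ℕ → ℂ) (G : ℝ → ℂ) (hG : Continuous G) :
    ∫ θ, (G θ * (starRingEnd ℂ) (tp N a θ)).re ∂nu
      = (∑ k ∈ range N, (starRingEnd ℂ) (a k) * cf G k).re := by
  have h1 : ∫ θ, (G θ * (starRingEnd ℂ) (tp N a θ)) ∂nu
      = ∑ k ∈ range N, (starRingEnd ℂ) (a k) * cf G k := by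
    unfold tp cf
    simp_rw [map_sum, map_mul, map_pow, conj_ee, Finset.mul_sum]
    rw [integral_finsetSum]
    · refine Finset.sum_congr rfl fun k _ => ?_
      rw [← integral_const_mul]
      congr 1; ext θ; ring
    · intro i _
      apply integrable_nu; fun_prop
  rw [← h1]
  have := integral_re (𝕜 := ℂ) (μ := nu) (f := fun θ => G θ * (starRingEnd ℂ) (tp N a θ))
    (integrable_nu (by fun_prop))
  simpa using this

lemma parseval1 (N : ℕ) (a : ℕ → ℂ) :
    ∫ θ, ‖tp N a θ‖ ^ 2 ∂nu = ∑ k ∈ range N, ‖a k‖ ^ 2 := by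
  have h := inner_tp N a (tp N a) (by fun_prop)
  simp_rw [Complex.mul_conj, Complex.ofReal_re, Complex.normSq_eq_norm_sq] at h
  rw [h, Complex.re_sum]
  refine Finset.sum_congr rfl fun k hk => ?_
  rw [cf_tp N a k (Finset.mem_range.mp hk), mul_comm, Complex.mul_conj, Complex.ofReal_re,
    Complex.normSq_eq_norm_sq]

lemma bessel (N : ℕ) (G : ℝ → ℂ) (hG : Continuous G) :
    ∑ k ∈ range N, ‖cf G k‖ ^ 2 ≤ ∫ θ, ‖G θ‖ ^ 2 ∂nu := by
  have h := inner_tp N (cf G) G hG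
  have hp := parseval1 N (cf G)
  have e1 : (∑ k ∈ range N, (starRingEnd ℂ) (cf G k) * cf G k).re
      = ∑ k ∈ range N, ‖cf G k‖ ^ 2 := by
    rw [Complex.re_sum]
    refine Finset.sum_congr rfl fun k hk => ?_
    rw [mul_comm, Complex.mul_conj, Complex.ofReal_re, Complex.normSq_eq_norm_sq]
  rw [e1] at h
  have h0 : 0 ≤ ∫ θ, ‖G θ - tp N (cf G) θ‖ ^ 2 ∂nu := integral_nonneg fun θ => by positivity
  have h2 : ∀ θ, ‖G θ - tp N (cf G) θ‖ ^ 2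
      = ‖G θ‖ ^ 2 + ‖tp N (cf G) θ‖ ^ 2 - 2 * (G θ * (starRingEnd ℂ) (tp N (cf G) θ)).re := by
    intro θ
    simp only [← Complex.normSq_eq_norm_sq]
    rw [Complex.normSq_sub]
  simp_rw [h2] at h0
  rw [integral_sub, integral_add, integral_const_mul, h, hp] at h0
  · linarith
  · apply integrable_nu; fun_prop
  · apply integrable_nu; fun_prop
  · apply integrable_nu; fun_prop
  · apply integrable_nu; 
    have : Continuous (fun x => (G x * (starRingEnd ℂ) (tp N (cf G) x))) := by fun_prop
    exact continuous_const.mul (Complex.continuous_re.comp this)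

lemma cf_diffCont (g : ℂ → ℂ) (hg : DiffContOnCl ℂ g (ball 0 1)) (k : ℕ) :
    cf (fun θ => g (ee θ)) k = iteratedDeriv k g 0 / k.factorial := by
  have h := DiffContOnCl.circleIntegral_one_div_sub_center_pow_smul (c := 0) one_pos k hg
  rw [circleIntegral] at h
  have h2 := intervalIntegral.smul_integral_comp_mul_left (a := 0) (b := 1)
    (fun t => deriv (circleMap 0 1) t • (1 / (circleMap 0 1 t - 0) ^ (k + 1)) • g (circleMap 0 1 t))
    (2 * Real.pi)
  rw [mul_zero, mul_one, h] at h2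
  have h3 : ∀ θ : ℝ, circleMap 0 1 (2 * Real.pi * θ) = ee θ := by
    intro θ
    simp only [circleMap, ee]; 
    push_cast
    rw [zero_add, one_mul]; congr 1; ring
  have h4 : ∀ θ : ℝ, deriv (circleMap 0 1) (2 * Real.pi * θ) •
      (1 / (circleMap 0 1 (2 * Real.pi * θ) - 0) ^ (k + 1)) • g (circleMap 0 1 (2 * Real.pi * θ))
      = Complex.I * (g (ee θ) * (ee θ)⁻¹ ^ k) := by
    intro θ
    have := ee_ne_zero θ
    rw [deriv_circleMap, h3]
    simp only [smul_eq_mul, sub_zero]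
    rw [inv_pow, pow_succ]
    field_simp
  simp_rw [h4] at h2
  rw [intervalIntegral.integral_const_mul, ← integral_nu] at h2
  change (2 * Real.pi) • (Complex.I * cf (fun θ => g (ee θ)) k) = _ at h2
  have h5 : (2 * Real.pi * Complex.I : ℂ) ≠ 0 := Complex.two_pi_I_ne_zero
  apply mul_left_cancel₀ h5
  rw [Complex.real_smul, smul_eq_mul] at h2
  push_cast at h2
  rw [mul_assoc, h2]
  ring

lemma sq_sum_le (k : ℕ) (x : ℕ × ℕ → ℂ) :
    (1 / 2 : ℝ) ^ k * ‖∑ p ∈ antidiagonal k, x p‖ ^ 2 ≤ ∑ p ∈ antidiagonal k, ‖x p‖ ^ 2 := by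
  have h1 : ‖∑ p ∈ antidiagonal k, x p‖ ^ 2 ≤ (k + 1) * ∑ p ∈ antidiagonal k, ‖x p‖ ^ 2 := by
    calc ‖∑ p ∈ antidiagonal k, x p‖ ^ 2 ≤ (∑ p ∈ antidiagonal k, ‖x p‖) ^ 2 := by
          gcongr; exact norm_sum_le _ _
      _ ≤ _ := by
          have := sq_sum_le_card_mul_sum_sq (s := antidiagonal k) (f := fun p => ‖x p‖)
          simpa using this
  have h2 : ((k : ℝ) + 1) ≤ 2 ^ k := by
    exact_mod_cast Nat.lt_two_pow_self
  have h3 : 0 ≤ ∑ p ∈ antidiagonal k, ‖x p‖ ^ 2 := Finset.sum_nonneg fun _ _ => by positivity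
  calc (1 / 2 : ℝ) ^ k * ‖∑ p ∈ antidiagonal k, x p‖ ^ 2
      ≤ (1 / 2 : ℝ) ^ k * (2 ^ k * ∑ p ∈ antidiagonal k, ‖x p‖ ^ 2) := by
        gcongr; exact h1.trans (by gcongr)
    _ = _ := by rw [← mul_assoc, ← mul_pow]; norm_num

lemma cf_mul (g h : ℂ → ℂ) (hg : DiffContOnCl ℂ g (ball 0 1)) (hh : DiffContOnCl ℂ h (ball 0 1))
    (k : ℕ) : cf (fun θ => g (ee θ) * h (ee θ)) k
      = ∑ p ∈ antidiagonal k, cf (fun θ => g (ee θ)) p.1 * cf (fun θ => h (ee θ)) p.2 := by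
  have h0 : (0 : ℂ) ∈ ball (0 : ℂ) 1 := by simp
  have cg : ContDiffAt ℂ k g 0 :=
    (hg.differentiableOn.contDiffOn isOpen_ball).contDiffAt (isOpen_ball.mem_nhds h0)
  have ch : ContDiffAt ℂ k h 0 :=
    (hh.differentiableOn.contDiffOn isOpen_ball).contDiffAt (isOpen_ball.mem_nhds h0)
  have := cf_diffCont (fun z => g z * h z) (hg.smul hh) k
  rw [this, iteratedDeriv_fun_mul cg ch, Finset.Nat.sum_antidiagonal_eq_sum_range_succ_mk,
    Finset.sum_div]
  refine Finset.sum_congr rfl fun i hi => ?_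
  have hi' : i ≤ k := Nat.lt_succ_iff.mp (Finset.mem_range.mp hi)
  simp only
  rw [cf_diffCont g hg, cf_diffCont h hh, Nat.cast_choose ℂ hi']
  have := Nat.cast_ne_zero (R := ℂ).mpr (Nat.factorial_ne_zero k)
  field_simp

lemma one_var (N : ℕ) (a : ℕ → ℂ) :
    Real.sqrt (∑ k ∈ range N, (1 / 2 : ℝ) ^ k * ‖a k‖ ^ 2) ≤ ∫ θ, ‖tp N a θ‖ ∂nu := by
  obtain ⟨g, h, hg, hh, e, n⟩ := Fac.poly (∑ k ∈ range N, Polynomial.C (a k) * Polynomial.X ^ k)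
  have hf : tp N a = fun θ => g (ee θ) * h (ee θ) := by
    ext θ
    rw [← e _ (norm_ee θ).le]
    simp [tp, Polynomial.eval_finsetSum]
  have hcont : ∀ g : ℂ → ℂ, DiffContOnCl ℂ g (ball 0 1) → Continuous (fun θ => g (ee θ)) := by
    intro g hg
    have := hg.continuousOn
    rw [closure_ball _ one_ne_zero] at this
    exact this.comp_continuous continuous_ee (fun θ => by simp [norm_ee])
  have hgh : ∀ θ, ‖g (ee θ)‖ = ‖h (ee θ)‖ := fun θ => n _ (norm_ee θ)
  have hn : ∀ θ, ‖tp N a θ‖ = ‖h (ee θ)‖ ^ 2 := by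
    intro θ; rw [hf]; simp only [norm_mul, hgh]; ring
  have Bg := bessel N _ (hcont g hg)
  have Bh := bessel N _ (hcont h hh)
  simp_rw [hgh, ← hn] at Bg
  simp_rw [← hn] at Bh
  apply Real.sqrt_le_iff.mpr
  refine ⟨integral_nonneg fun _ => norm_nonneg _, ?_⟩
  set G := cf (fun θ => g (ee θ))
  set H := cf (fun θ => h (ee θ))
  calc ∑ k ∈ range N, (1 / 2 : ℝ) ^ k * ‖a k‖ ^ 2
      ≤ ∑ k ∈ range N, ∑ p ∈ antidiagonal k, ‖G p.1‖ ^ 2 * ‖H p.2‖ ^ 2 := by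
        refine Finset.sum_le_sum fun k hk => ?_
        rw [← cf_tp N a k (Finset.mem_range.mp hk), hf, cf_mul g h hg hh]
        refine (sq_sum_le k _).trans (le_of_eq ?_)
        refine Finset.sum_congr rfl fun p _ => ?_
        rw [norm_mul, mul_pow]
    _ ≤ ∑ p ∈ range N ×ˢ range N, ‖G p.1‖ ^ 2 * ‖H p.2‖ ^ 2 := by
        rw [← Finset.sum_biUnion]
        · refine Finset.sum_le_sum_of_subset_of_nonneg ?_ fun _ _ _ => by positivity
          intro p hp
          simp only [Finset.mem_biUnion, Finset.mem_range, HasAntidiagonal.mem_antidiagonal] at hp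
          obtain ⟨k, hk, hp⟩ := hp
          simp only [Finset.mem_product, Finset.mem_range]
          omega
        · intro i _ j _ hij
          rw [Function.onFun, Finset.disjoint_left]
          intro p hp hp'
          rw [HasAntidiagonal.mem_antidiagonal] at hp hp'
          omega
    _ = (∑ k ∈ range N, ‖G k‖ ^ 2) * (∑ k ∈ range N, ‖H k‖ ^ 2) := by
        rw [Finset.sum_mul_sum, Finset.sum_product]
    _ ≤ _ := by
        rw [sq]
        exact mul_le_mul Bg Bh (Finset.sum_nonneg fun _ _ => by positivity)
          (integral_nonneg fun _ => norm_nonneg _)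

lemma minkowski {X : Type*} [MeasurableSpace X] (μ : Measure X) (s : Finset ℕ) (f : ℕ → X → ℝ)
    (hf : ∀ k ∈ s, Integrable (f k) μ)
    (hI : Integrable (fun x => Real.sqrt (∑ k ∈ s, f k x ^ 2)) μ) :
    Real.sqrt (∑ k ∈ s, (∫ x, f k x ∂μ) ^ 2) ≤ ∫ x, Real.sqrt (∑ k ∈ s, f k x ^ 2) ∂μ := by
  set c := fun k => ∫ x, f k x ∂μ with hc
  set S := ∑ k ∈ s, c k ^ 2 with hS
  have hS0 : 0 ≤ S := Finset.sum_nonneg fun _ _ => by positivity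
  have h1 : S = ∫ x, ∑ k ∈ s, c k * f k x ∂μ := by
    rw [integral_finsetSum _ fun k hk => (hf k hk).const_mul _]
    refine Finset.sum_congr rfl fun k _ => ?_
    rw [integral_const_mul, sq]
  have h2 : S ≤ Real.sqrt S * ∫ x, Real.sqrt (∑ k ∈ s, f k x ^ 2) ∂μ := by
    rw [← integral_const_mul]
    conv_lhs => rw [h1]
    refine integral_mono (integrable_finsetSum _ fun k hk => (hf k hk).const_mul _)
      (hI.const_mul _) fun x => ?_
    exact Real.sum_mul_le_sqrt_mul_sqrt s c (fun k => f k x)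
  change Real.sqrt S ≤ _
  rcases eq_or_lt_of_le (Real.sqrt_nonneg S) with h | h
  · rw [← h]; exact integral_nonneg fun x => Real.sqrt_nonneg _
  · have : Real.sqrt S * Real.sqrt S = S := Real.mul_self_sqrt hS0
    rw [← this] at h2
    rw [Real.sqrt_mul_self h.le] at h2
    exact le_of_mul_le_mul_left h2 h

noncomputable def SS (n N : ℕ) : Finset (Fin n → ℕ) := Fintype.piFinset (fun _ : Fin n => range N)

lemma sum_SS {M : Type*} [AddCommMonoid M] (n N : ℕ) (F : (Fin (n + 1) → ℕ) → M) :
    ∑ α ∈ SS (n + 1) N, F α = ∑ k ∈ range N, ∑ β ∈ SS n N, F (Fin.cons k β) := by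
  rw [← Finset.sum_product']
  refine Finset.sum_bij' (fun α _ => (α 0, Fin.tail α)) (fun p _ => Fin.cons p.1 p.2) ?_ ?_ ?_ ?_ ?_
  · intro α hα
    simp only [SS, Fintype.mem_piFinset, Finset.mem_product] at hα ⊢
    exact ⟨hα 0, fun i => hα i.succ⟩
  · intro p hp
    simp only [SS, Fintype.mem_piFinset, Finset.mem_product] at hp ⊢
    intro i
    refine Fin.cases ?_ (fun j => ?_) i
    · simpa using hp.1
    · simpa using hp.2 j
  · intro α _; simp
  · intro p _; simp
  · intro α _; simp

noncomputable def QQ (n N : ℕ) (a : (Fin n → ℕ) → ℂ) (θ : Fin n → ℝ) : ℂ :=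
  ∑ α ∈ SS n N, a α * ∏ i, ee (θ i) ^ α i

@[fun_prop]
lemma continuous_QQ (n N : ℕ) (a : (Fin n → ℕ) → ℂ) : Continuous (QQ n N a) := by
  unfold QQ; fun_prop

lemma QQ_bound (n N : ℕ) (a : (Fin n → ℕ) → ℂ) (θ : Fin n → ℝ) :
    ‖QQ n N a θ‖ ≤ ∑ α ∈ SS n N, ‖a α‖ := by
  refine (norm_sum_le _ _).trans (le_of_eq ?_)
  refine Finset.sum_congr rfl fun α _ => ?_
  simp [norm_ee]

lemma QQ_cons (n N : ℕ) (a : (Fin (n + 1) → ℕ) → ℂ) (t : ℝ) (φ : Fin n → ℝ) :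
    QQ (n + 1) N a (Fin.cons t φ) = tp N (fun k => QQ n N (fun β => a (Fin.cons k β)) φ) t := by
  unfold QQ tp
  rw [sum_SS]
  refine Finset.sum_congr rfl fun k _ => ?_
  rw [Finset.sum_mul]
  refine Finset.sum_congr rfl fun β _ => ?_
  rw [Fin.prod_univ_succ]
  simp only [Fin.cons_zero, Fin.cons_succ]
  ring

noncomputable def mu (n : ℕ) : Measure (Fin n → ℝ) := Measure.pi (fun _ : Fin n => nu)

instance (n : ℕ) : IsProbabilityMeasure (mu n) := by unfold mu; infer_instance

lemma integrable_mu {n : ℕ} {F : (Fin n → ℝ) → ℝ} (hF : Continuous F) (C : ℝ)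
    (hC : ∀ x, |F x| ≤ C) : Integrable F (mu n) :=
  Integrable.of_bound hF.aestronglyMeasurable C (Filter.Eventually.of_forall hC)

lemma integral_mu_succ {n : ℕ} {F : (Fin (n + 1) → ℝ) → ℝ} (hF : Continuous F) (C : ℝ)
    (hC : ∀ x, |F x| ≤ C) :
    Integrable (fun φ => ∫ t, F (Fin.cons t φ) ∂nu) (mu n) ∧
    ∫ θ, F θ ∂(mu (n + 1)) = ∫ φ, ∫ t, F (Fin.cons t φ) ∂nu ∂(mu n) := by
  have hmp := measurePreserving_piFinSuccAbove (fun _ : Fin (n + 1) => nu) 0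
  have h1 := hmp.integral_comp' (fun p : ℝ × (Fin n → ℝ) => F (Fin.cons p.1 p.2))
  have h2 : ∀ x : Fin (n + 1) → ℝ,
      (Fin.cons ((MeasurableEquiv.piFinSuccAbove (fun _ => ℝ) 0) x).1
        ((MeasurableEquiv.piFinSuccAbove (fun _ => ℝ) 0) x).2 : Fin (n + 1) → ℝ) = x := by
    intro x
    ext i
    refine Fin.cases ?_ (fun j => ?_) i
    · simp [MeasurableEquiv.piFinSuccAbove, Fin.insertNthEquiv]
    · simp [MeasurableEquiv.piFinSuccAbove, Fin.insertNthEquiv, Fin.tail]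
  simp_rw [h2] at h1
  have hint : Integrable (fun p : ℝ × (Fin n → ℝ) => F (Fin.cons p.1 p.2)) (nu.prod (mu n)) := by
    refine Integrable.of_bound (Continuous.aestronglyMeasurable ?_) C
      (Filter.Eventually.of_forall fun p => hC _)
    refine hF.comp (continuous_pi fun i => ?_)
    refine Fin.cases ?_ (fun j => ?_) i
    · simpa using continuous_fst
    · simp only [Fin.cons_succ]; fun_prop
  refine ⟨hint.integral_prod_right, ?_⟩
  have h3 := integral_prod_symm _ hint
  rw [← h3]
  exact h1

lemma parseval_mu (N n : ℕ) (a : (Fin n → ℕ) → ℂ) :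
    ∫ θ, ‖QQ n N a θ‖ ^ 2 ∂(mu n) = ∑ α ∈ SS n N, ‖a α‖ ^ 2 := by
  have hb : ∀ n a (x : Fin n → ℝ), |‖QQ n N a x‖ ^ 2| ≤ (∑ α ∈ SS n N, ‖a α‖) ^ 2 := by
    intro n a x
    rw [abs_of_nonneg (by positivity)]
    gcongr; exact QQ_bound n N a x
  induction n with
  | zero => simp [QQ, SS]
  | succ n ih =>
    rw [(integral_mu_succ (by fun_prop) _ (hb _ a)).2, sum_SS]
    simp_rw [QQ_cons, parseval1]
    rw [integral_finsetSum _ fun k _ => integrable_mu (by fun_prop) _ (hb _ _)]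
    exact Finset.sum_congr rfl fun k _ => ih _

lemma hyper_mu (N n : ℕ) (a : (Fin n → ℕ) → ℂ) :
    Real.sqrt (∑ α ∈ SS n N, (1 / 2 : ℝ) ^ (∑ i, α i) * ‖a α‖ ^ 2) ≤
      ∫ θ, ‖QQ n N a θ‖ ∂(mu n) := by
  have hb : ∀ n a (x : Fin n → ℝ), |‖QQ n N a x‖| ≤ (∑ α ∈ SS n N, ‖a α‖) := by
    intro n a x
    rw [abs_of_nonneg (by positivity)]
    exact QQ_bound n N a x
  induction n with
  | zero => simp [QQ, SS]
  | succ n ih =>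
    obtain ⟨hI, h⟩ := integral_mu_succ (n := n) (F := fun θ => ‖QQ (n + 1) N a θ‖)
      (by fun_prop) _ (hb _ a)
    rw [h, sum_SS]
    simp_rw [QQ_cons] at hI ⊢
    set b := fun k => QQ n N (fun β => a (Fin.cons k β)) with hbdef
    set f : ℕ → (Fin n → ℝ) → ℝ := fun k φ => Real.sqrt ((1 / 2) ^ k) * ‖b k φ‖ with hfdef
    have hw : ∀ k : ℕ, Real.sqrt ((1 / 2) ^ k) ^ 2 = (1 / 2) ^ k :=
      fun k => Real.sq_sqrt (by positivity)
    have hfc : ∀ k, Continuous (f k) := fun k => by simp only [hfdef, hbdef]; fun_prop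
    have hone : ∀ φ, Real.sqrt (∑ k ∈ range N, f k φ ^ 2)
        ≤ ∫ t, ‖tp N (fun k => b k φ) t‖ ∂nu := by
      intro φ
      simp only [hfdef, mul_pow, hw]
      exact one_var N (fun k => b k φ)
    have hsI : Integrable (fun φ => Real.sqrt (∑ k ∈ range N, f k φ ^ 2)) (mu n) := by
      refine hI.mono' (Continuous.aestronglyMeasurable (by fun_prop))
        (Filter.Eventually.of_forall fun φ => ?_)
      rw [Real.norm_of_nonneg (Real.sqrt_nonneg _)]
      exact hone φ
    have hfI : ∀ k ∈ range N, Integrable (f k) (mu n) := fun k _ =>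
      (integrable_mu (F := fun φ => ‖b k φ‖) (by simp only [hbdef]; fun_prop) _ (hb _ _)).const_mul _
    refine le_trans ?_ ((minkowski (mu n) (range N) f hfI hsI).trans (integral_mono hsI hI hone))
    refine Real.sqrt_le_sqrt (Finset.sum_le_sum fun k _ => ?_)
    simp only [hfdef]
    rw [integral_const_mul, mul_pow, hw]
    have ihk := (Real.sqrt_le_iff.mp (ih (fun β => a (Fin.cons k β)))).2
    calc _ = (1 / 2 : ℝ) ^ k * ∑ β ∈ SS n N, (1 / 2 : ℝ) ^ (∑ i, β i) * ‖a (Fin.cons k β)‖ ^ 2 := by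
          rw [Finset.mul_sum]
          refine Finset.sum_congr rfl fun β _ => ?_
          rw [Fin.sum_univ_succ]
          simp only [Fin.cons_zero, Fin.cons_succ, pow_add]
          ring
      _ ≤ _ := by gcongr

lemma antidiag_eq (n m : ℕ) : Finset.Nat.antidiagonalTuple n m
    = (SS n (m + 1)).filter (fun α => ∑ i, α i = m) := by
  ext α
  simp only [Finset.Nat.mem_antidiagonalTuple, SS, Finset.mem_filter, Fintype.mem_piFinset,
    Finset.mem_range]
  constructor
  · intro h
    refine ⟨fun i => ?_, h⟩
    rw [← h]
    exact Nat.lt_succ_of_le (Finset.single_le_sum (f := α) (fun _ _ => Nat.zero_le _)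
      (Finset.mem_univ i))
  · exact fun h => h.2

/-- Hypercontractive `L¹`–`L²` inequality for `m`-homogeneous polynomials on the
`n`-torus: `(∑_α |a_α|²)^{1/2} = ‖P‖_{L²(μⁿ)} ≤ √2^m · ‖P‖_{L¹(μⁿ)}`. -/
theorem l1_l2_hypercontractivity (m n : ℕ) (hm : 0 < m) (hn : 0 < n)
    (a : (Fin n → ℕ) → ℂ) :
    Real.sqrt (∑ α ∈ Finset.Nat.antidiagonalTuple n m, ‖a α‖ ^ 2)
        = Real.sqrt (∫ θ in Set.univ.pi (fun _ : Fin n => Set.Ioc (0 : ℝ) 1),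
            ‖mhEval n m a (torusParam n θ)‖ ^ 2)
      ∧ Real.sqrt (∫ θ in Set.univ.pi (fun _ : Fin n => Set.Ioc (0 : ℝ) 1),
            ‖mhEval n m a (torusParam n θ)‖ ^ 2)
          ≤ Real.sqrt 2 ^ m *
            ∫ θ in Set.univ.pi (fun _ : Fin n => Set.Ioc (0 : ℝ) 1),
              ‖mhEval n m a (torusParam n θ)‖ := by
  set a' : (Fin n → ℕ) → ℂ := fun α => if ∑ i, α i = m then a α else 0 with ha'
  have hQ : ∀ θ, mhEval n m a (torusParam n θ) = QQ n (m + 1) a' θ := by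
    intro θ
    unfold mhEval QQ
    rw [antidiag_eq, Finset.sum_filter]
    refine Finset.sum_congr rfl fun α _ => ?_
    simp only [ha', torusParam, ee]
    split_ifs <;> simp
  have hmu : (volume : Measure (Fin n → ℝ)).restrict
      (Set.univ.pi (fun _ : Fin n => Set.Ioc (0 : ℝ) 1)) = mu n := by
    rw [volume_pi, Measure.restrict_pi_pi]; rfl
  have hS : ∑ α ∈ Finset.Nat.antidiagonalTuple n m, ‖a α‖ ^ 2
      = ∑ α ∈ SS n (m + 1), ‖a' α‖ ^ 2 := by
    rw [antidiag_eq, Finset.sum_filter]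
    refine Finset.sum_congr rfl fun α _ => ?_
    simp only [ha']
    split_ifs <;> simp
  simp_rw [hQ]
  rw [hmu, hS, parseval_mu]
  refine ⟨rfl, ?_⟩
  have h := hyper_mu (m + 1) n a'
  have h2 : ∑ α ∈ SS n (m + 1), (1 / 2 : ℝ) ^ (∑ i, α i) * ‖a' α‖ ^ 2
      = (1 / 2 : ℝ) ^ m * ∑ α ∈ SS n (m + 1), ‖a' α‖ ^ 2 := by
    rw [Finset.mul_sum]
    refine Finset.sum_congr rfl fun α _ => ?_
    simp only [ha']
    split_ifs with hα
    · rw [hα]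
    · simp
  rw [h2] at h
  calc Real.sqrt (∑ α ∈ SS n (m + 1), ‖a' α‖ ^ 2)
      = Real.sqrt 2 ^ m * Real.sqrt ((1 / 2 : ℝ) ^ m * ∑ α ∈ SS n (m + 1), ‖a' α‖ ^ 2) := by
        have h3 : Real.sqrt 2 ^ m = Real.sqrt (2 ^ m) := by
          symm
          rw [Real.sqrt_eq_iff_mul_self_eq (by positivity) (by positivity), ← mul_pow]
          norm_num
        rw [h3, ← Real.sqrt_mul (by positivity), ← mul_assoc, ← mul_pow]
        norm_num
    _ ≤ _ := by gcongr
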